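/- Let K be an n×n real matrix with nonnegative off-diagonal entries and zero column sums (i.e., k_{ii} = -∑_{m≠i} k_{mi}). Then for every eigenvalue λ of K with λ ≠ 0, one has |Im λ| ≤ cot(π/n) · |Re λ|. -/

import Mathlib

open Real Matrix

lemma tilt_cycle_aux (m : ℕ) (hm : 0 < m) (u : ℕ → ℂ) (α : ℝ) (hα : 0 < α) (hα2 : α ≤ π / 2)
    (hu : ∀ k, Real.sin α ≤ (u k).im)
    (hne : u 0 ≠ Complex.exp (α * Complex.I))
    (hprod : ∏ k ∈ Finset.range m, u k = Complex.exp ((m * α : ℝ) * Complex.I)) :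
    α + π / m ≤ π / 2 := by
  have hpi := Real.pi_pos
  have hmR : (0 : ℝ) < m := by exact_mod_cast hm
  have hs : 0 < Real.sin α := Real.sin_pos_of_pos_of_lt_pi hα (by linarith)
  have him : ∀ k, 0 < (u k).im := fun k => lt_of_lt_of_le hs (hu k)
  have hu0 : ∀ k, u k ≠ 0 := by
    intro k h
    have := him k
    simp [h] at this
  have hn0 : ∀ k, 0 < ‖u k‖ := fun k => norm_pos_iff.2 (hu0 k)
  obtain ⟨x, hxdef⟩ : ∃ x : ℕ → ℝ, ∀ k, x k = (u k).arg := ⟨_, fun _ => rfl⟩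
  have hpolar : ∀ k, (‖u k‖ : ℂ) * Complex.exp (x k * Complex.I) = u k := by
    intro k; rw [hxdef]; exact Complex.norm_mul_exp_arg_mul_I _
  have hsin : ∀ k, ‖u k‖ * Real.sin (x k) = (u k).im := by
    intro k; rw [hxdef]; exact Complex.norm_mul_sin_arg _
  have hsx : ∀ k, 0 < Real.sin (x k) := by
    intro k
    have h1 := hsin k
    have h2 := him k
    have h3 := hn0 k
    by_contra h
    push Not at h
    nlinarith
  have hx0 : ∀ k, 0 < x k := by
    intro k
    by_contra h
    push Not at h
    have h1 : -π < x k := by rw [hxdef]; exact Complex.neg_pi_lt_arg _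
    have := Real.sin_nonpos_of_nonpos_of_neg_pi_le h h1.le
    linarith [hsx k]
  have hxpi : ∀ k, x k < π := by
    intro k
    have h1 : x k ≤ π := by rw [hxdef]; exact Complex.arg_le_pi _
    refine lt_of_le_of_ne h1 ?_
    intro h
    have := hsx k
    rw [h] at this
    simp at this
  -- norms
  have hN : ∏ k ∈ Finset.range m, ‖u k‖ = 1 := by
    rw [← norm_prod, hprod, Complex.norm_exp_ofReal_mul_I]
  have hL : ∑ k ∈ Finset.range m, Real.log ‖u k‖ = 0 := by
    rw [← Real.log_prod (fun k _ => (hn0 k).ne'), hN, Real.log_one]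
  -- angle
  set S := ∑ k ∈ Finset.range m, x k with hS
  have hexp : Complex.exp ((S : ℝ) * Complex.I) = Complex.exp ((m * α : ℝ) * Complex.I) := by
    rw [← hprod, ← Finset.prod_congr rfl (fun k _ => hpolar k), Finset.prod_mul_distrib,
      ← Complex.exp_sum, ← Finset.sum_mul, ← Complex.ofReal_prod, hN, ← Complex.ofReal_sum]
    simp [hS]
  obtain ⟨w, hw⟩ := Complex.exp_eq_exp_iff_exists_int.1 hexp
  have hSw : S = m * α + w * (2 * π) := by
    have := congrArg Complex.im hw
    simpa using this
  -- AM-GM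
  have hterm : ∀ k, 1 - Real.sin (x k) / Real.sin α ≤ Real.log ‖u k‖ := by
    intro k
    have h1 : Real.log (Real.sin (x k) / Real.sin α) ≤ Real.sin (x k) / Real.sin α - 1 :=
      Real.log_le_sub_one_of_pos (div_pos (hsx k) hs)
    have h2 : Real.log (Real.sin α / Real.sin (x k)) ≤ Real.log ‖u k‖ := by
      apply Real.log_le_log (div_pos hs (hsx k))
      rw [div_le_iff₀ (hsx k), hsin]
      exact hu k
    have h3 : Real.log (Real.sin α / Real.sin (x k)) = - Real.log (Real.sin (x k) / Real.sin α) := by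
      rw [← Real.log_inv, inv_div]
    linarith
  have hamgm : m * Real.sin α ≤ ∑ k ∈ Finset.range m, Real.sin (x k) := by
    have := Finset.sum_le_sum (s := Finset.range m) (fun k _ => hterm k)
    rw [hL, Finset.sum_sub_distrib, ← Finset.sum_div] at this
    simp only [Finset.sum_const, Finset.card_range, nsmul_eq_mul, mul_one] at this
    have h2 : (m : ℝ) ≤ (∑ k ∈ Finset.range m, Real.sin (x k)) / Real.sin α := by linarith
    rwa [le_div_iff₀ hs] at h2
  have hmean : Real.sin α ≤ ∑ k ∈ Finset.range m, (1 / m : ℝ) • Real.sin (x k) := by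
    rw [← Finset.smul_sum, smul_eq_mul, one_div, ← div_eq_inv_mul, le_div_iff₀ hmR]
    linarith
  have hw1 : ∑ k ∈ Finset.range m, (1 / m : ℝ) = 1 := by
    simp [hmR.ne']
  have hmem : ∀ k ∈ Finset.range m, x k ∈ Set.Icc 0 π := fun k _ => ⟨(hx0 k).le, (hxpi k).le⟩
  have hSm : ∑ k ∈ Finset.range m, (1 / m : ℝ) • x k = S / m := by
    rw [← Finset.smul_sum, smul_eq_mul, hS]; ring
  have hjen := strictConcaveOn_sin_Icc.concaveOn.le_map_sum (t := Finset.range m)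
    (w := fun _ => (1 / m : ℝ)) (p := x) (fun _ _ => by positivity) hw1 hmem
  rw [hSm] at hjen
  have hfin : Real.sin α ≤ Real.sin (S / m) := hmean.trans hjen
  have hSmw : S / m = α + w * (2 * π) / m := by rw [hSw]; field_simp
  have hne' : (Finset.range m).Nonempty := ⟨0, by simpa using hm⟩
  have hSpos : 0 < S / m := div_pos (Finset.sum_pos (fun k _ => hx0 k) hne') hmR
  have hSlt : S / m < π := by
    rw [div_lt_iff₀ hmR]
    calc S < ∑ k ∈ Finset.range m, π := Finset.sum_lt_sum_of_nonempty hne' (fun k _ => hxpi k)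
      _ = π * m := by simp [mul_comm]
  rcases lt_trichotomy w 0 with h | h | h
  · exfalso
    have hwR : (w : ℝ) < 0 := by exact_mod_cast h
    have h1 : w * (2 * π) / m < 0 := div_neg_of_neg_of_pos (by nlinarith) hmR
    have := Real.sin_lt_sin_of_lt_of_le_pi_div_two (x := S / m) (y := α) (by linarith) hα2
      (by linarith)
    linarith
  · exfalso
    have hSα : S / m = α := by rw [hSmw, h]; simp
    have heq := strictConcaveOn_sin_Icc.eq_of_map_sum_eq (t := Finset.range m)
      (w := fun _ => (1 / m : ℝ)) (p := x) (fun _ _ => by positivity) hw1 hmem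
      (by rw [hSm, hSα]; exact hmean)
    have h0 : (0 : ℕ) ∈ Finset.range m := by simpa using hm
    have hx00 : x 0 = α := by
      rw [← hSα, ← hSm, Finset.sum_congr rfl (fun k hk => by rw [heq hk h0]), ← Finset.sum_smul, hw1,
        one_smul]
    have hge : ∀ k ∈ Finset.range m, 0 ≤ Real.log ‖u k‖ := by
      intro k hk
      apply Real.log_nonneg
      have h1 := hsin k
      rw [heq hk h0, hx00] at h1
      have h2 := hu k
      rw [← h1] at h2
      nlinarith
    have hz := (Finset.sum_eq_zero_iff_of_nonneg hge).1 hL 0 h0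
    have h1 : ‖u 0‖ = 1 := Real.eq_one_of_pos_of_log_eq_zero (hn0 0) hz
    apply hne
    rw [← hpolar 0, h1, hx00]
    simp
  · have hwR : (1 : ℝ) ≤ w := by exact_mod_cast h
    have h1 : S / m ≤ π - α := by
      by_contra hcon
      push Not at hcon
      have := Real.sin_lt_sin_of_lt_of_le_pi_div_two (x := π - S / m) (y := α) (by linarith) hα2
        (by linarith)
      rw [Real.sin_pi_sub] at this
      linarith
    have h2 : 2 * (π / m) ≤ w * (2 * π) / m := by
      rw [mul_div_assoc, mul_div_assoc]
      have : 0 < π / m := by positivity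
      nlinarith
    linarith

lemma tilt_step_aux {n : ℕ} (K : Matrix (Fin n) (Fin n) ℝ)
    (hoff : ∀ i j, i ≠ j → 0 ≤ K i j) (hcol : ∀ j, ∑ i, K i j = 0)
    (lam : ℂ) (hne : lam ≠ 0) (v : Fin n → ℂ)
    (hv : ∀ i, ∑ j, (K j i : ℂ) * v j = lam * v i) (e : ℂ) (he : (e * lam).im = 0)
    (i : Fin n) (hi : v i ≠ 0) :
    ∃ j, v j ≠ v i ∧ e.im ≤ (e * (v j / v i)).im := by
  by_contra hcon
  push Not at hcon
  have hsum : ∑ j, (K j i : ℂ) * (v j / v i - 1) = lam := by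
    have h1 : ∑ j, (K j i : ℂ) * (v j / v i - 1)
        = (∑ j, (K j i : ℂ) * v j) / v i - ((∑ j, K j i : ℝ) : ℂ) := by
      rw [Complex.ofReal_sum, Finset.sum_div, ← Finset.sum_sub_distrib]
      exact Finset.sum_congr rfl (fun j _ => by ring)
    rw [h1, hcol, hv]
    field_simp
    simp
  have hIm : ∑ j, K j i * ((e * (v j / v i)).im - e.im) = 0 := by
    rw [← he, ← hsum, Finset.mul_sum, Complex.im_sum]
    refine Finset.sum_congr rfl (fun j _ => ?_)
    have : e * ((K j i : ℂ) * (v j / v i - 1)) = (K j i : ℂ) * (e * (v j / v i) - e) := by ring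
    rw [this, Complex.im_ofReal_mul, Complex.sub_im]
  have hle : ∀ j ∈ Finset.univ, K j i * ((e * (v j / v i)).im - e.im) ≤ 0 := by
    intro j _
    by_cases hj : v j = v i
    · rw [hj, div_self hi]; simp
    · have h1 := hcon j hj
      have h2 := hoff j i (fun h => hj (by rw [h]))
      nlinarith
  have hz := (Finset.sum_eq_zero_iff_of_nonpos hle).1 hIm
  apply hne
  rw [← hsum]
  refine Finset.sum_eq_zero (fun j _ => ?_)
  by_cases hj : v j = v i
  · rw [hj, div_self hi]; simp
  · have h1 := hcon j hj
    have h2 := hz j (Finset.mem_univ _)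
    rcases mul_eq_zero.1 h2 with h | h
    · rw [h]; simp
    · linarith

lemma tilt_re_aux {n : ℕ} (K : Matrix (Fin n) (Fin n) ℝ)
    (hoff : ∀ i j, i ≠ j → 0 ≤ K i j) (hcol : ∀ j, ∑ i, K i j = 0)
    (lam : ℂ) (v : Fin n → ℂ) (hv0 : v ≠ 0)
    (hv : ∀ i, ∑ j, (K j i : ℂ) * v j = lam * v i) : lam.re ≤ 0 := by
  obtain ⟨i0, hi0⟩ := Function.ne_iff.1 hv0
  obtain ⟨i, -, hmax⟩ := Finset.exists_max_image Finset.univ (fun i => ‖v i‖) ⟨i0, Finset.mem_univ _⟩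
  have hpos : 0 < ‖v i‖ := lt_of_lt_of_le (norm_pos_iff.2 hi0) (hmax i0 (Finset.mem_univ _))
  have hi : v i ≠ 0 := norm_pos_iff.1 hpos
  have hsum : ∑ j, (K j i : ℂ) * (v j / v i - 1) = lam := by
    have h1 : ∑ j, (K j i : ℂ) * (v j / v i - 1)
        = (∑ j, (K j i : ℂ) * v j) / v i - ((∑ j, K j i : ℝ) : ℂ) := by
      rw [Complex.ofReal_sum, Finset.sum_div, ← Finset.sum_sub_distrib]
      exact Finset.sum_congr rfl (fun j _ => by ring)
    rw [h1, hcol, hv]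
    field_simp
    simp
  rw [← hsum, Complex.re_sum]
  refine Finset.sum_nonpos (fun j _ => ?_)
  rw [Complex.re_ofReal_mul, Complex.sub_re, Complex.one_re]
  by_cases hj : j = i
  · rw [hj, div_self hi]; simp
  · have h1 : (v j / v i).re ≤ 1 := by
      refine (Complex.re_le_norm _).trans ?_
      rw [norm_div, div_le_one hpos]
      exact hmax j (Finset.mem_univ _)
    have h2 := hoff j i hj
    nlinarith

lemma tilt_pos_aux (n : ℕ) (hn : 2 ≤ n) (K : Matrix (Fin n) (Fin n) ℝ)
    (hoff : ∀ i j, i ≠ j → 0 ≤ K i j) (hcol : ∀ j, ∑ i, K i j = 0)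
    (lam : ℂ) (hpos : 0 < lam.im) (v : Fin n → ℂ) (hv0 : v ≠ 0)
    (hv : ∀ i, ∑ j, (K j i : ℂ) * v j = lam * v i) :
    lam.im ≤ Real.cot (π / n) * |lam.re| := by
  have hpi := Real.pi_pos
  have hne : lam ≠ 0 := by
    intro h
    simp [h] at hpos
  have hre := tilt_re_aux K hoff hcol lam v hv0 hv
  obtain ⟨α, hαdef⟩ : ∃ α : ℝ, α = π - lam.arg := ⟨_, rfl⟩
  have hnorm : 0 < ‖lam‖ := norm_pos_iff.2 hne
  have hsinα : ‖lam‖ * Real.sin α = lam.im := by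
    rw [hαdef, Real.sin_pi_sub]; exact Complex.norm_mul_sin_arg _
  have hcosα : ‖lam‖ * Real.cos α = - lam.re := by
    rw [hαdef, Real.cos_pi_sub, mul_neg, Complex.norm_mul_cos_arg]
  have hspos : 0 < Real.sin α := by
    by_contra h
    push Not at h
    nlinarith
  have hcpos : 0 ≤ Real.cos α := by
    by_contra h
    push Not at h
    nlinarith
  have hα0 : 0 < α := by
    have h1 := Complex.arg_le_pi lam
    rcases eq_or_lt_of_le h1 with h | h
    · rw [hαdef, h] at hspos; simp at hspos
    · linarith
  have hα2 : α ≤ π / 2 := by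
    by_contra h
    push Not at h
    have h1 : 0 ≤ lam.arg := Complex.arg_nonneg_iff.2 hpos.le
    have := Real.cos_neg_of_pi_div_two_lt_of_lt h (by linarith)
    linarith
  set e : ℂ := Complex.exp (α * Complex.I) with he
  have heim : e.im = Real.sin α := by rw [he, Complex.exp_ofReal_mul_I_im]
  have here : e.re = Real.cos α := by rw [he, Complex.exp_ofReal_mul_I_re]
  have helam : (e * lam).im = 0 := by
    rw [Complex.mul_im, heim, here, ← hsinα]
    have : lam.re = - (‖lam‖ * Real.cos α) := by linarith
    rw [this]; ring
  have hstep : ∀ i : {i : Fin n // v i ≠ 0}, ∃ j : {i : Fin n // v i ≠ 0},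
      v j ≠ v i ∧ e.im ≤ (e * (v j / v i)).im := by
    rintro ⟨i, hi⟩
    obtain ⟨j, h1, h2⟩ := tilt_step_aux K hoff hcol lam hne v hv e helam i hi
    refine ⟨⟨j, ?_⟩, h1, h2⟩
    intro h
    rw [h] at h2
    simp at h2
    linarith
  choose f hf1 hf2 using hstep
  obtain ⟨i0, hi0⟩ := Function.ne_iff.1 hv0
  have hper : ∃ y, y ∈ Function.periodicPts f := by
    obtain ⟨a, b, hab, h⟩ := Finite.exists_ne_map_eq_of_infinite
      (fun k : ℕ => f^[k] (⟨i0, hi0⟩ : {i : Fin n // v i ≠ 0}))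
    wlog hlt : a < b generalizing a b
    · exact this b a hab.symm h.symm (by omega)
    refine ⟨f^[a] ⟨i0, hi0⟩, Function.mk_mem_periodicPts (n := b - a) (by omega) ?_⟩
    change f^[b - a] (f^[a] _) = _
    rw [← Function.iterate_add_apply, Nat.sub_add_cancel hlt.le]
    exact h.symm
  obtain ⟨y, hy⟩ := hper
  have hm := Function.minimalPeriod_pos_of_mem_periodicPts hy
  have hmn : Function.minimalPeriod f y ≤ n := by
    refine Function.minimalPeriod_le_card.trans ?_
    exact (Fintype.card_subtype_le _).trans (by simp)
  have hmp : f^[Function.minimalPeriod f y] y = y := Function.iterate_minimalPeriod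
  set m := Function.minimalPeriod f y with hmdef
  have key := tilt_cycle_aux m hm (fun k => e * (v (f^[k+1] y) / v (f^[k] y))) α hα0 hα2
    (by
      intro k
      rw [← heim, Function.iterate_succ_apply']
      exact hf2 _)
    (by
      intro h
      simp only [zero_add, Function.iterate_one, Function.iterate_zero, id] at h
      rw [← he] at h
      have he0 : e ≠ 0 := Complex.exp_ne_zero _
      have h2 : v (f y) / v y = 1 := mul_left_cancel₀ he0 (by rw [h, mul_one])
      rw [div_eq_one_iff_eq y.2] at h2
      exact hf1 y h2)
    (by
      have htel : ∀ q : ℕ, ∏ k ∈ Finset.range q, (v (f^[k+1] y) / v (f^[k] y)) = v (f^[q] y) / v y := by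
        intro q
        induction q with
        | zero => simp [div_self y.2]
        | succ q ih =>
          rw [Finset.prod_range_succ, ih]
          have := (f^[q] y).2
          have := y.2
          field_simp
      rw [Finset.prod_mul_distrib, htel, hmp, div_self y.2, Finset.prod_const, Finset.card_range,
        mul_one, he, ← Complex.exp_nat_mul]
      congr 1
      push_cast
      ring)
  have hnR : (0 : ℝ) < n := by positivity
  have hmR : (0 : ℝ) < m := by exact_mod_cast hm
  have hmn' : π / n ≤ π / m := by
    have : (m : ℝ) ≤ n := by exact_mod_cast hmn
    gcongr
  have hpn : 0 < π / n := by positivity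
  have hcos : 0 ≤ Real.cos (α + π / n) :=
    Real.cos_nonneg_of_neg_pi_div_two_le_of_le (by linarith) (by linarith)
  rw [Real.cos_add] at hcos
  have hsn : 0 < Real.sin (π / n) := Real.sin_pos_of_pos_of_lt_pi hpn (by linarith)
  rw [abs_of_nonpos hre, ← hsinα, ← hcosα, Real.cot_eq_cos_div_sin, div_mul_eq_mul_div,
    le_div_iff₀ hsn]
  nlinarith

theorem metzler_zero_colsum_eigenvalue_tilt_bound
    (n : ℕ) (hn : 2 ≤ n) (K : Matrix (Fin n) (Fin n) ℝ)
    (hoff : ∀ i j, i ≠ j → 0 ≤ K i j)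
    (hcol : ∀ j, ∑ i, K i j = 0)
    (lam : ℂ)
    (hlam : lam ∈ spectrum ℂ (K.map (algebraMap ℝ ℂ)))
    (hne : lam ≠ 0) :
    |lam.im| ≤ Real.cot (Real.pi / n) * |lam.re| := by
  rw [spectrum.mem_iff, Matrix.isUnit_iff_isUnit_det, isUnit_iff_ne_zero, not_not] at hlam
  obtain ⟨v, hv0, hv⟩ := Matrix.exists_vecMul_eq_zero_iff.2 hlam
  have hv' : ∀ i, ∑ j, (K j i : ℂ) * v j = lam * v i := by
    intro i
    have h := congrFun hv i
    rw [Matrix.vecMul_sub, Matrix.algebraMap_eq_diagonal, Pi.sub_apply,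
      Matrix.vecMul_diagonal, Pi.zero_apply, sub_eq_zero] at h
    simp only [Matrix.vecMul, dotProduct, Matrix.map_apply, Pi.algebraMap_apply,
      Algebra.algebraMap_self, RingHom.id_apply, Complex.coe_algebraMap] at h
    rw [mul_comm lam, h]
    exact Finset.sum_congr rfl (fun j _ => mul_comm _ _)
  rcases lt_trichotomy lam.im 0 with h | h | h
  · have := tilt_pos_aux n hn K hoff hcol (starRingEnd ℂ lam) (by simpa using h)
      (fun i => starRingEnd ℂ (v i))
      (by
        intro h0
        apply hv0
        funext i
        simpa using congrFun h0 i)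
      (by
        intro i
        have := congrArg (starRingEnd ℂ) (hv' i)
        simpa using this)
    rw [abs_of_neg h]
    simpa using this
  · rw [h, abs_zero]
    have hpi := Real.pi_pos
    have hn2 : (2 : ℝ) ≤ n := by exact_mod_cast hn
    have h1 : π / n ≤ π / 2 := by gcongr
    have h0 : 0 < π / n := by positivity
    rw [Real.cot_eq_cos_div_sin]
    have := Real.cos_nonneg_of_neg_pi_div_two_le_of_le (x := π / n) (by linarith) h1
    have := Real.sin_nonneg_of_nonneg_of_le_pi h0.le (by linarith)
    positivity
  · rw [abs_of_pos h]
    exact tilt_pos_aux n hn K hoff hcol lam h v hv0 hv'
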